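/- arXiv:2412.19889 — 2 statements merged into one kernel-verified Lean document; each statement's English description precedes it below -/
import Mathlib

section
/- Let n ≥ 1 and let a x : Fin n → ℝ satisfy |a j * x i| < 1 for all i, j. Then the family indexed by strictly decreasing tuples k : Fin n → ℕ with every value k l even, with term D(a, k) · D(x, k), has sum equal to (∏_{i<j} (a j - a i)) · (∏_{i<j} (x j - x i)) · (∏_{i<j} (a i + a j)) · (∏_{i<j} (x i + x j)) · ∏_{i,j} (1 - (a i)^2 * (x j)^2)⁻¹. (Determinant form of identity (5), obtained from Theorem 1 with g(x) = 1/(1−x²); only partitions in P_{n,even} contribute.) -/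
/-!
With `U i m = a i ^ m` and `V i m = x i ^ m`, the geometric series gives
`∑ m, U i m * V j m = (1 - a i * x j)⁻¹`. The Cauchy–Binet formula for absolutely convergent series
therefore writes the Cauchy determinant `det (1 - a i * x j)⁻¹` as the sum over strictly decreasing
`k` of `det (a i ^ k j) * det (x i ^ k j)`. Replacing `a` and `x` by their squares turns the
exponents `k` into `2 * k`, which are exactly the strictly decreasing tuples with even values, and
each difference `a j ^ 2 - a i ^ 2` factors.
-/

open Equiv Finset

section ProductOfSeries

variable {α R : Type*} [hα : Fintype α] [NormedCommRing R] {ι : α → Type*} {f : ∀ i, ι i → R}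

theorem summable_norm_prod_pi (hf : ∀ i, Summable fun m => ‖f i m‖) :
    Summable fun k : ∀ i, ι i => ‖∏ i, f i (k i)‖ := by
  revert ι
  refine @(Fintype.induction_empty_option ?_ ?_ ?_ α (h_fintype := hα))
  · intro α β _ e ih ι f hf
    let := Fintype.ofEquiv β e.symm
    rw [← (piCongrLeft ι e).summable_iff]
    refine (ih fun i => hf (e i)).congr fun k => ?_
    simp [← e.prod_comp]
  · intro ι f _
    exact (hasSum_fintype _).summable
  · intro α _ ih ι f hf
    rw [← piOptionEquivProd.symm.summable_iff]
    refine ((hf none).mul_norm (ih fun i => hf (some i))).congr fun k => ?_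
    simp [piOptionEquivProd, Fintype.prod_option]

theorem hasSum_prod_pi {s : α → R} (hf : ∀ i, Summable fun m => ‖f i m‖)
    (hs : ∀ i, HasSum (f i) (s i)) :
    HasSum (fun k : ∀ i, ι i => ∏ i, f i (k i)) (∏ i, s i) := by
  revert ι s
  refine @(Fintype.induction_empty_option ?_ ?_ ?_ α (h_fintype := hα))
  · intro α β _ e ih ι f s hf hs
    let := Fintype.ofEquiv β e.symm
    rw [← (piCongrLeft ι e).hasSum_iff, ← e.prod_comp]
    refine (ih (fun i => hf (e i)) fun i => hs (e i)).congr_fun fun k => ?_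
    simp [← e.prod_comp]
  · intro ι f s _ _
    simp
  · intro α _ ih ι f s hf hs
    have hf' := summable_norm_prod_pi fun i => hf (some i)
    have hs' := ih (fun i => hf (some i)) fun i => hs (some i)
    have hmul := summable_mul_of_summable_norm' (hf none) (hs none).summable hf' hs'.summable
    rw [← piOptionEquivProd.symm.hasSum_iff, Fintype.prod_option]
    refine ((hs none).mul hs' hmul).congr_fun fun k => ?_
    simp [piOptionEquivProd, Fintype.prod_option]

end ProductOfSeries

section Rearrangement

variable {ι : Type*} [LinearOrder ι] {n : ℕ}

theorem injective_strictAnti_comp_perm :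
    Function.Injective fun p : {k : Fin n → ι // StrictAnti k} × Perm (Fin n) => p.1.1 ∘ p.2 := by
  rintro ⟨⟨k, hk⟩, σ⟩ ⟨⟨l, hl⟩, τ⟩ (h : k ∘ σ = l ∘ τ)
  have hcomp : k = l ∘ (τ * σ⁻¹ : Perm (Fin n)) := by
    ext i
    simpa using congrFun h (σ⁻¹ i)
  obtain rfl : k = l := hcomp.trans
    (Tuple.unique_antitone (τ := 1) (hcomp ▸ hk.antitone) hl.antitone)
  obtain rfl : σ = τ := Equiv.ext fun i => hk.injective (congrFun h i)
  rfl

theorem range_strictAnti_comp_perm :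
    Set.range (fun p : {k : Fin n → ι // StrictAnti k} × Perm (Fin n) => p.1.1 ∘ p.2) =
      {f | Function.Injective f} := by
  refine Set.Subset.antisymm ?_ fun f (hf : Function.Injective f) => ?_
  · rintro _ ⟨⟨⟨k, hk⟩, σ⟩, rfl⟩
    exact hk.injective.comp σ.injective
  · let σ := Tuple.sort (OrderDual.toDual ∘ f)
    have hanti : Antitone (f ∘ σ) := Tuple.monotone_sort (OrderDual.toDual ∘ f)
    refine ⟨⟨⟨f ∘ σ, hanti.strictAnti_of_injective (hf.comp σ.injective)⟩, σ⁻¹⟩, ?_⟩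
    ext i
    simp

end Rearrangement

section CauchyBinet

variable {R ι : Type*}

theorem sum_perm_det_submatrix_mul_prod {m : Type*} [Fintype m] [DecidableEq m] [CommRing R]
    (M N : Matrix m m R) :
    ∑ σ : Perm m, (M.submatrix id σ).det * ∏ i, N i (σ i) = M.det * N.det := by
  rw [← N.det_transpose, Matrix.det_apply' N.transpose, mul_sum]
  refine sum_congr rfl fun σ _ => ?_
  rw [Matrix.det_permute']
  simp only [Matrix.transpose_apply]
  ring

variable [NormedCommRing R]

theorem hasSum_det_submatrix_mul_prod {m : Type*} [Fintype m] [DecidableEq m]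
    {U V : Matrix m ι R} {A : Matrix m m R} (hUV : ∀ i j, Summable fun l => ‖U i l * V j l‖)
    (hA : ∀ i j, HasSum (fun l => U i l * V j l) (A i j)) :
    HasSum (fun f : m → ι => (U.submatrix id f).det * ∏ j, V j (f j)) A.det := by
  simp only [Matrix.det_apply', sum_mul, Matrix.submatrix_apply, id]
  refine hasSum_sum fun σ _ => ?_
  have hσ := hasSum_prod_pi (fun j => hUV (σ j) j) fun j => hA (σ j) j
  refine (hσ.mul_left _).congr_fun fun f => ?_
  rw [prod_mul_distrib, mul_assoc]

theorem hasSum_det_submatrix_mul_det_submatrix [LinearOrder ι] {n : ℕ}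
    {U V : Matrix (Fin n) ι R} {A : Matrix (Fin n) (Fin n) R}
    (hUV : ∀ i j, Summable fun l => ‖U i l * V j l‖)
    (hA : ∀ i j, HasSum (fun l => U i l * V j l) (A i j)) :
    HasSum (fun k : {k : Fin n → ι // StrictAnti k} =>
      (U.submatrix id k.1).det * (V.submatrix id k.1).det) A.det := by
  have hsum := hasSum_det_submatrix_mul_prod hUV hA
  rw [← injective_strictAnti_comp_perm.hasSum_iff] at hsum
  · exact (hsum.prod_fiberwise fun k => hasSum_fintype _).congr_fun fun k =>
      (sum_perm_det_submatrix_mul_prod (U.submatrix id k.1) (V.submatrix id k.1)).symm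
  · intro f hf
    obtain ⟨i, j, hij, hne⟩ : ∃ i j, f i = f j ∧ i ≠ j := by
      simpa [range_strictAnti_comp_perm, Function.Injective] using hf
    rw [Matrix.det_zero_of_column_eq hne fun l => by simp [hij], zero_mul]

end CauchyBinet

section CauchyDeterminant

variable {K : Type*} [Field K] {n : ℕ}

theorem det_succ_eq_mul_det_schur_complement (M : Matrix (Fin (n + 1)) (Fin (n + 1)) K)
    (h : M 0 0 ≠ 0) :
    M.det = M 0 0 *
      (Matrix.of fun i j : Fin n => M i.succ j.succ - M i.succ 0 / M 0 0 * M 0 j.succ).det := by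
  let c : Fin n → K := fun i => M i.succ 0 / M 0 0
  let N : Matrix (Fin (n + 1)) (Fin (n + 1)) K :=
    Matrix.of (Fin.cons (M 0) fun i j => M i.succ j - c i * M 0 j)
  have hMN : M.det = N.det := by
    refine Matrix.det_eq_of_forall_row_eq_smul_add_const (Fin.cons 0 c) 0 rfl fun i j => ?_
    cases i using Fin.cases <;> simp [N]
  have hcol : ∀ i : Fin n, N i.succ 0 = 0 := fun i => by simp [N, c, h]
  rw [hMN, Matrix.det_succ_column_zero, Fin.sum_univ_succ]
  simp only [hcol, mul_zero, zero_mul, sum_const_zero, add_zero, Fin.val_zero, pow_zero, one_mul,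
    Fin.succAbove_zero]
  rfl

theorem inv_one_sub_mul_sub_mul {p q r s : K} (hpq : 1 - p * q ≠ 0) (hps : 1 - p * s ≠ 0)
    (hrq : 1 - r * q ≠ 0) :
    (1 - p * q)⁻¹ - (1 - p * s)⁻¹ * (1 - r * s) * (1 - r * q)⁻¹ =
      (p - r) * (1 - p * s)⁻¹ * ((q - s) * (1 - r * q)⁻¹ * (1 - p * q)⁻¹) := by
  have hqr : 1 - q * r ≠ 0 := by rwa [mul_comm]
  field_simp
  ring

theorem det_inv_one_sub_mul {a x : Fin n → K} (h : ∀ i j, 1 - a i * x j ≠ 0) :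
    (Matrix.of fun i j => (1 - a i * x j)⁻¹).det =
      (∏ i, ∏ j ∈ Ioi i, (a j - a i)) * (∏ i, ∏ j ∈ Ioi i, (x j - x i)) *
        ∏ i, ∏ j, (1 - a i * x j)⁻¹ := by
  induction n with
  | zero => simp
  | succ n ih =>
    -- The Schur complement is again a Cauchy matrix `C`, with rows scaled by `r`, columns by `c`.
    let r : Fin n → K := fun i => (a i.succ - a 0) * (1 - a i.succ * x 0)⁻¹
    let c : Fin n → K := fun j => (x j.succ - x 0) * (1 - a 0 * x j.succ)⁻¹
    let C : Matrix (Fin n) (Fin n) K := Matrix.of fun i j => (1 - a i.succ * x j.succ)⁻¹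
    have hscale : (Matrix.of fun i j => r i * (c j * C i j)).det =
        (∏ i, r i) * ((∏ j, c j) * C.det) := by
      rw [← Matrix.det_mul_row, ← Matrix.det_mul_column]
      rfl
    rw [ih fun i j => h i.succ j.succ] at hscale
    rw [det_succ_eq_mul_det_schur_complement _ (inv_ne_zero (h 0 0))]
    simp only [Matrix.of_apply, div_inv_eq_mul,
      inv_one_sub_mul_sub_mul (h _ _) (h _ _) (h _ _)]
    refine (congrArg _ hscale).trans ?_
    simp only [r, c, Fin.prod_univ_succ, Fin.prod_Ioi_zero, Fin.prod_Ioi_succ, prod_mul_distrib]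
    ring

end CauchyDeterminant

section CauchyIdentity

theorem prod_Ioi_sq_sub_sq {ι R : Type*} [Fintype ι] [Preorder ι] [LocallyFiniteOrderTop ι]
    [CommRing R] (y : ι → R) :
    ∏ i, ∏ j ∈ Ioi i, (y j ^ 2 - y i ^ 2) =
      (∏ i, ∏ j ∈ Ioi i, (y j - y i)) * ∏ i, ∏ j ∈ Ioi i, (y i + y j) := by
  simp only [← prod_mul_distrib]
  exact prod_congr rfl fun i _ => prod_congr rfl fun j _ => by ring

/-- Doubling all values, as a bijection from strictly decreasing families of natural numbers onto
those with only even values; its inverse halves them. It turns exponents of squares into even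
exponents. -/
def strictAntiEquivEven (ι : Type*) [Preorder ι] :
    {k : ι → ℕ // StrictAnti k} ≃ {k : ι → ℕ // StrictAnti k ∧ ∀ l, Even (k l)} where
  toFun k := ⟨fun l => 2 * k.1 l, k.2.const_mul two_pos, fun _ => even_two_mul _⟩
  invFun k := ⟨fun l => k.1 l / 2, fun i j hij =>
    Nat.div_lt_div_of_lt_of_dvd (k.2.2 i).two_dvd (k.2.1 hij)⟩
  left_inv k := by ext; simp
  right_inv k := by
    ext l
    exact Nat.two_mul_div_two_of_even (k.2.2 l)

variable {K : Type*} [NormedField K] {n : ℕ} {a x : Fin n → K}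

theorem hasSum_det_pow_mul_det_pow (hax : ∀ i j, ‖a i * x j‖ < 1) :
    HasSum
      (fun k : {k : Fin n → ℕ // StrictAnti k} =>
        (Matrix.of fun i j => a i ^ k.1 j).det * (Matrix.of fun i j => x i ^ k.1 j).det)
      ((∏ i, ∏ j ∈ Ioi i, (a j - a i)) * (∏ i, ∏ j ∈ Ioi i, (x j - x i)) *
        ∏ i, ∏ j, (1 - a i * x j)⁻¹) := by
  have hne : ∀ i j, 1 - a i * x j ≠ 0 := fun i j h =>
    (hax i j).ne (by rw [← sub_eq_zero.1 h, norm_one])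
  rw [← det_inv_one_sub_mul hne]
  refine hasSum_det_submatrix_mul_det_submatrix (U := Matrix.of fun i m => a i ^ m)
    (V := Matrix.of fun i m => x i ^ m) (fun i j => ?_) fun i j => ?_
  · simpa only [Matrix.of_apply, mul_pow] using summable_norm_geometric_of_norm_lt_one (hax i j)
  · simpa only [Matrix.of_apply, mul_pow] using hasSum_geometric_of_norm_lt_one (hax i j)

theorem cauchy_type_identity_even_general (hax : ∀ i j, ‖a j * x i‖ < 1) :
    HasSum
      (fun k : {k : Fin n → ℕ // StrictAnti k ∧ ∀ l, Even (k l)} =>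
        (Matrix.of fun i j => a i ^ k.1 j).det * (Matrix.of fun i j => x i ^ k.1 j).det)
      ((∏ i, ∏ j ∈ Ioi i, (a j - a i)) * (∏ i, ∏ j ∈ Ioi i, (x j - x i)) *
        (∏ i, ∏ j ∈ Ioi i, (a i + a j)) * (∏ i, ∏ j ∈ Ioi i, (x i + x j)) *
        ∏ i, ∏ j, (1 - a i ^ 2 * x j ^ 2)⁻¹) := by
  have hsq : ∀ i j, ‖a i ^ 2 * x j ^ 2‖ < 1 := fun i j => by
    rw [← mul_pow, norm_pow]
    exact pow_lt_one₀ (norm_nonneg _) (hax j i) two_ne_zero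
  have hsum := hasSum_det_pow_mul_det_pow hsq
  simp only [← pow_mul] at hsum
  rw [prod_Ioi_sq_sub_sq, prod_Ioi_sq_sub_sq, mul_mul_mul_comm, ← mul_assoc] at hsum
  exact (strictAntiEquivEven (Fin n)).hasSum_iff.1 hsum

end CauchyIdentity

theorem cauchy_type_identity_even
    (n : ℕ) (hn : 1 ≤ n) (a x : Fin n → ℝ)
    (hax : ∀ i j : Fin n, |a j * x i| < 1) :
    HasSum
      (fun k : {k : Fin n → ℕ // StrictAnti k ∧ ∀ l : Fin n, Even (k l)} =>
        (Matrix.of fun i j : Fin n => (a i) ^ (k.1 j)).det *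
          (Matrix.of fun i j : Fin n => (x i) ^ (k.1 j)).det)
      ((∏ i : Fin n, ∏ j ∈ Finset.Ioi i, (a j - a i)) *
        (∏ i : Fin n, ∏ j ∈ Finset.Ioi i, (x j - x i)) *
        (∏ i : Fin n, ∏ j ∈ Finset.Ioi i, (a i + a j)) *
        (∏ i : Fin n, ∏ j ∈ Finset.Ioi i, (x i + x j)) *
        ∏ i : Fin n, ∏ j : Fin n, (1 - (a i) ^ 2 * (x j) ^ 2)⁻¹) :=
  cauchy_type_identity_even_general hax
end

section
/- Let n ≥ 1 and let a x : Fin n → ℝ be arbitrary. Then the family indexed by strictly decreasing tuples k : Fin n → ℕ with every value k l odd, with term (∏_{l} ((-1)^((k l - 1)/2) / (k l)!)) · D(a, k) · D(x, k), has sum equal to the determinant of the n×n matrix with (i,j) entry Real.sin (a j * x i). (Determinant form of the sine example, from Theorem 1 with g(x) = sin x: the coefficient of x^k in sin x is (−1)^{(k−1)/2}/k! for odd k and 0 for even k.) -/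
/-! The expansion
`sin (a j * x i) = ∑ₘ x i ^ (2 * m + 1) * ((-1) ^ m / (2 * m + 1)! * a j ^ (2 * m + 1))` factors the
matrix of sines through an infinite inner index, and the Cauchy–Binet formula applies: expanding the
determinant of the product by multilinearity gives a sum over all tuples of inner indices. Tuples
with a repeated entry contribute zero, and an injective tuple is uniquely a permutation of a
strictly decreasing one, so summing over the permutations first produces the second determinant. -/

open Equiv Function Matrix

section ProductOfSeries

variable {R : Type*} [NormedCommRing R] {n : ℕ} {κ : Fin n → Type*} {f : ∀ i, κ i → R}

theorem summable_norm_fin_prod (hf : ∀ i, Summable fun m => ‖f i m‖) :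
    Summable fun k : ∀ i, κ i => ‖∏ i, f i (k i)‖ := by
  induction n with
  | zero => exact Summable.of_finite
  | succ n ih =>
    rw [← (Fin.consEquiv κ).summable_iff]
    simpa only [comp_def, Fin.consEquiv, Equiv.coe_fn_mk, Fin.prod_univ_succ, Fin.cons_zero,
      Fin.cons_succ] using (hf 0).mul_norm (ih fun i => hf i.succ)

theorem hasSum_fin_prod [CompleteSpace R] {s : Fin n → R} (hs : ∀ i, HasSum (f i) (s i))
    (hf : ∀ i, Summable fun m => ‖f i m‖) :
    HasSum (fun k : ∀ i, κ i => ∏ i, f i (k i)) (∏ i, s i) := by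
  induction n with
  | zero => simp
  | succ n ih =>
    have htail := ih (fun i => hs i.succ) fun i => hf i.succ
    have hmul := summable_mul_of_summable_norm (hf 0) <|
      summable_norm_fin_prod fun i => hf (Fin.succ i)
    rw [← (Fin.consEquiv κ).hasSum_iff]
    simpa only [comp_def, Fin.consEquiv, Equiv.coe_fn_mk, Fin.prod_univ_succ, Fin.cons_zero,
      Fin.cons_succ] using (hs 0).mul htail hmul

end ProductOfSeries

/-- The pair `(k, σ)` corresponds to `k ∘ σ`: every injective tuple is uniquely a permutation of a
strictly decreasing one, which is recovered by sorting. -/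
def strictAntiProdPermEquiv (n : ℕ) (α : Type*) [LinearOrder α] :
    {k : Fin n → α // StrictAnti k} × Perm (Fin n) ≃ {k : Fin n → α // Injective k} where
  toFun p := ⟨p.1 ∘ p.2, p.1.2.injective.comp p.2.injective⟩
  invFun k :=
    have hanti : Antitone (k.1 ∘ Tuple.sort (OrderDual.toDual ∘ k.1)) :=
      Tuple.monotone_sort (OrderDual.toDual ∘ k.1)
    ⟨⟨_, hanti.strictAnti_of_injective (k.2.comp (Equiv.injective _))⟩,
      (Tuple.sort (OrderDual.toDual ∘ k.1))⁻¹⟩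
  left_inv := by
    rintro ⟨⟨k, hk⟩, σ⟩
    have hsorted : (k ∘ σ) ∘ Tuple.sort (OrderDual.toDual ∘ k ∘ σ) = (k ∘ σ) ∘ (σ⁻¹ : Perm _) :=
      Tuple.unique_antitone (Tuple.monotone_sort (OrderDual.toDual ∘ k ∘ σ))
        (by simpa [comp_assoc] using hk.antitone)
    have hsort : Tuple.sort (OrderDual.toDual ∘ k ∘ σ) = σ⁻¹ :=
      Equiv.ext fun i => (hk.injective.comp σ.injective) (congrFun hsorted i)
    refine Prod.ext (Subtype.ext (hsorted.trans ?_)) ((congrArg (·⁻¹) hsort).trans (inv_inv σ))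
    simp [comp_assoc]
  right_inv k := Subtype.ext <| funext fun i => by simp

section CauchyBinet

variable {R : Type*}

theorem sum_perm_prod_mul_det_submatrix [CommRing R] {ι α : Type*} [Fintype ι] [DecidableEq ι]
    (A : Matrix ι α R) (B : Matrix α ι R) (k : ι → α) :
    ∑ σ : Perm ι, (∏ i, B (k (σ i)) i) * (A.submatrix id (k ∘ σ)).det =
      (A.submatrix id k).det * (B.submatrix k id).det := by
  rw [det_apply' (B.submatrix k id), Finset.mul_sum]
  refine Finset.sum_congr rfl fun σ _ => ?_
  have hdet : (A.submatrix id (k ∘ σ)).det = Perm.sign σ * (A.submatrix id k).det :=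
    det_permute' σ (A.submatrix id k)
  simp only [hdet, submatrix_apply, id_eq]
  ring

variable [NormedCommRing R] [CompleteSpace R] {n : ℕ} {α : Type*} {A : Matrix (Fin n) α R}
  {B : Matrix α (Fin n) R} {C : Matrix (Fin n) (Fin n) R}

theorem hasSum_prod_mul_det_submatrix (hC : ∀ i j, HasSum (fun m => A i m * B m j) (C i j))
    (hAB : ∀ i j, Summable fun m => ‖A i m * B m j‖) :
    HasSum (fun k : Fin n → α => (∏ i, B (k i) i) * (A.submatrix id k).det) C.det := by
  simp only [det_apply', Finset.mul_sum]
  refine hasSum_sum fun σ _ => ?_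
  have hprod := hasSum_fin_prod (fun i => hC (σ i) i) fun i => hAB (σ i) i
  convert! hprod.mul_left (Perm.sign σ : R) using 2 with k
  simp only [submatrix_apply, id_eq, Finset.prod_mul_distrib]
  ring

theorem hasSum_det_submatrix_mul_det_submatrix_s10 [LinearOrder α]
    (hC : ∀ i j, HasSum (fun m => A i m * B m j) (C i j))
    (hAB : ∀ i j, Summable fun m => ‖A i m * B m j‖) :
    HasSum (fun k : {k : Fin n → α // StrictAnti k} =>
      (A.submatrix id k).det * (B.submatrix k id).det) C.det := by
  have hsupport : support (fun k : Fin n → α => (∏ i, B (k i) i) * (A.submatrix id k).det) ⊆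
      {k | Injective k} := by
    intro k hk i j hij
    by_contra hne
    have hdet : (A.submatrix id k).det = 0 :=
      det_zero_of_column_eq hne fun l => congrArg (A l) hij
    exact hk (by simp only [hdet, mul_zero])
  have hinj := (hasSum_subtype_iff_of_support_subset hsupport).2
    (hasSum_prod_mul_det_submatrix hC hAB)
  refine ((strictAntiProdPermEquiv n α).hasSum_iff.2 hinj).prod_fiberwise fun k => ?_
  rw [← sum_perm_prod_mul_det_submatrix]
  exact hasSum_fintype _

/-- The family `e` lists the exponents of the power series `g`, so that exponents with vanishing
coefficient need not occur among the tuples. -/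
theorem hasSum_det_pow_mul_det_pow_s10 [LinearOrder α] {c : α → R} {e : α → ℕ} {g : R → R}
    {a x : Fin n → R}
    (hg : ∀ i j, HasSum (fun m => c m * (a j * x i) ^ e m) (g (a j * x i)))
    (hc : ∀ i j, Summable fun m => ‖c m * (a j * x i) ^ e m‖) :
    HasSum (fun k : {k : Fin n → α // StrictAnti k} =>
      (∏ l, c (k.1 l)) * (of fun i j => a i ^ e (k.1 j)).det *
        (of fun i j => x i ^ e (k.1 j)).det)
      (of fun i j => g (a j * x i)).det := by
  let A : Matrix (Fin n) α R := of fun i m => x i ^ e m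
  let B : Matrix α (Fin n) R := of fun m j => c m * a j ^ e m
  have hfactor (i j : Fin n) (m : α) : c m * (a j * x i) ^ e m = A i m * B m j := by
    simp only [A, B, of_apply]
    ring
  have hdetB (k : Fin n → α) :
      (B.submatrix k id).det = (∏ l, c (k l)) * (of fun i j => a i ^ e (k j)).det := by
    rw [← det_transpose (of fun i j => a i ^ e (k j)), ← det_mul_column]
    rfl
  simp only [hfactor] at hg hc
  convert! hasSum_det_submatrix_mul_det_submatrix_s10 (C := of fun i j => g (a j * x i)) hg hc using 2
    with k
  rw [hdetB, mul_comm]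
  rfl

end CauchyBinet

/-- Strictly decreasing tuples of odd numbers, parametrised by `k ↦ 2 * k + 1`. -/
def strictAntiEquivStrictAntiOdd (ι : Type*) [Preorder ι] :
    {k : ι → ℕ // StrictAnti k} ≃ {k : ι → ℕ // StrictAnti k ∧ ∀ l, Odd (k l)} where
  toFun k := ⟨fun l => 2 * k.1 l + 1, fun i j hij => by have := k.2 hij; lia,
    fun l => odd_two_mul_add_one _⟩
  invFun k := ⟨fun l => k.1 l / 2, fun i j hij => by
    have := k.2.1 hij
    have := Nat.two_mul_div_two_add_one_of_odd (k.2.2 i)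
    have := Nat.two_mul_div_two_add_one_of_odd (k.2.2 j)
    lia⟩
  left_inv k := Subtype.ext <| funext fun l => by lia
  right_inv k := Subtype.ext <| funext fun l => Nat.two_mul_div_two_add_one_of_odd (k.2.2 l)

theorem cauchy_type_identity_sin
    (n : ℕ) (hn : 1 ≤ n) (a x : Fin n → ℝ) :
    HasSum
      (fun k : {k : Fin n → ℕ // StrictAnti k ∧ ∀ l : Fin n, Odd (k l)} =>
        (∏ l : Fin n, ((-1 : ℝ) ^ ((k.1 l - 1) / 2) / (Nat.factorial (k.1 l) : ℝ))) *
          (Matrix.of fun i j : Fin n => (a i) ^ (k.1 j)).det *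
          (Matrix.of fun i j : Fin n => (x i) ^ (k.1 j)).det)
      (Matrix.of fun i j : Fin n => Real.sin (a j * x i)).det := by
  have hsin (r : ℝ) : HasSum
      (fun m : ℕ => (-1) ^ m / ((2 * m + 1).factorial : ℝ) * r ^ (2 * m + 1)) (Real.sin r) := by
    simpa only [div_mul_eq_mul_div] using Real.hasSum_sin r
  rw [← (strictAntiEquivStrictAntiOdd (Fin n)).hasSum_iff]
  simpa [comp_def, strictAntiEquivStrictAntiOdd] using
    hasSum_det_pow_mul_det_pow_s10 (fun i j => hsin (a j * x i)) fun i j => (hsin _).summable.norm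
end
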